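/- arXiv:2409.00545 — 2 statements merged into one kernel-verified Lean document; each statement's English description precedes it below -/
import Mathlib

section
/- Assume GCH. Let κ be an uncountable cardinal and G a κ-existentially closed group of cardinality κ. Then there is a chain of subgroups {G_λ} indexed by the regular cardinals λ ≤ κ, increasing with λ, with union G, such that each G_λ is a λ-existentially closed group of cardinality λ and G_κ = G. -/
universe u

/-- `G` is `κ`-existentially closed: every system of fewer than `κ` equations and fewer than
`κ` inequations (words in the free product of `G` with free variables `X`), which has a
solution in some overgroup of `G`, already has a solution in `G`. -/
def IsKappaEC (κ : Cardinal.{u}) (G : Type u) [Group G] : Prop :=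
  ∀ (X : Type u) (eqs ineqs : Set (FreeGroup (G ⊕ X))),
    Cardinal.mk eqs < κ → Cardinal.mk ineqs < κ →
    (∃ (H : Type u) (_ : Group H) (i : G →* H), Function.Injective i ∧
      ∃ v : X → H,
        (∀ w ∈ eqs, FreeGroup.lift (Sum.elim (⇑i) v) w = 1) ∧
        (∀ w ∈ ineqs, FreeGroup.lift (Sum.elim (⇑i) v) w ≠ 1)) →
    ∃ v : X → G,
      (∀ w ∈ eqs, FreeGroup.lift (Sum.elim (id : G → G) v) w = 1) ∧
      (∀ w ∈ ineqs, FreeGroup.lift (Sum.elim (id : G → G) v) w ≠ 1)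

/-- The generalized continuum hypothesis. -/
def GCH : Prop := ∀ c : Cardinal.{u}, Cardinal.aleph0 ≤ c → 2 ^ c = Order.succ c

/-! Fix a rank function `ρ` on `G` with exactly `λ` elements of rank less than `λ`, for every
`λ ≤ κ`. Up to renaming letters, a system over a subgroup of `G` is given by a template over an
abstract alphabet of fewer than `κ` letters together with an assignment of elements to its
coefficient letters. For every template and every such assignment choose once and for all a
solution in `G` (if there is one). This is a single family of operations on `G`, and `G_λ` is the
subgroup generated by the elements of rank less than `λ` under the operations that come from
templates of size less than `λ`; so `G_λ` increases with `λ`.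

A system over `G_λ` that is solvable in an overgroup of `G_λ` is solvable in the amalgam of this
overgroup with `G`, hence in `G`, hence in `G_λ`: so `G_λ` is `λ`-existentially closed. If
`λ^{<λ} = λ`, there are at most `λ` operations, each of arity less than `λ`, and the closure has
cardinality `λ`. Under GCH this covers all regular `λ`. -/

open Cardinal Function

section Cardinals

theorem exists_rank (α : Type u) :
    ∃ ρ : α → Cardinal.{u}, Set.range ρ = Set.Iio #α ∧ ∀ l ≤ #α, #{x | ρ x < l} = l := by
  obtain ⟨r, _, hr⟩ := exists_ord_eq α
  have exists_typein_eq {c : Cardinal.{u}} (hc : c < #α) : ∃ x, Ordinal.typein r x = c.ord :=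
    Ordinal.typein_surj r (hr ▸ ord_lt_ord.2 hc)
  have card_typein_lt (x : α) : (Ordinal.typein r x).card < #α :=
    lt_ord.1 (hr ▸ Ordinal.typein_lt_type r x)
  refine ⟨fun x => (Ordinal.typein r x).card, Set.ext fun c => ⟨?_, fun hc => ?_⟩, fun l hl => ?_⟩
  · rintro ⟨x, rfl⟩
    exact card_typein_lt x
  · obtain ⟨x, hx⟩ := exists_typein_eq hc
    exact ⟨x, by simp [hx]⟩
  · obtain rfl | hl := hl.eq_or_lt
    · have : {x | (Ordinal.typein r x).card < #α} = Set.univ := Set.eq_univ_of_forall card_typein_lt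
      rw [this, mk_univ]
    · obtain ⟨x, hx⟩ := exists_typein_eq hl
      have : {y | (Ordinal.typein r y).card < l} = {y | r y x} := by
        ext y
        simp only [Set.mem_ofPred_eq]
        rw [← lt_ord, ← hx, Ordinal.typein_lt_typein]
      rw [this, ← card_ord l, ← hx]
      exact (Ordinal.card_typein x).symm

theorem mk_biUnion_lt_of_finite {α β : Type u} {l : Cardinal.{u}} (hl : ℵ₀ ≤ l) {T : Set α}
    (hT : #T < l) {F : α → Set β} (hF : ∀ a, (F a).Finite) : #(⋃ a ∈ T, F a) < l := by
  obtain hfin | hinf := T.finite_or_infinite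
  · exact (hfin.biUnion fun a _ => hF a).lt_aleph0.trans_le hl
  · have := hinf.to_subtype
    calc #(⋃ a ∈ T, F a) ≤ #T * ⨆ a : T, #(F a) := mk_biUnion_le F T
      _ ≤ #T * #T := by
        gcongr
        exact ciSup_le' fun a => (hF a).lt_aleph0.le.trans (aleph0_le_mk T)
      _ = #T := mul_mk_eq_max.trans (max_self _)
      _ < l := hT

theorem mk_setOf_mk_lt_le {α : Type u} {l : Cardinal.{u}} (hl : ℵ₀ ≤ l) (hpow : l ^< l ≤ l)
    (hα : #α ≤ l) : #{s : Set α | #s < l} ≤ l := by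
  obtain ⟨ρ, hρ, -⟩ := exists_rank l.out
  rw [mk_out] at hρ
  have hcover : {s : Set α | #s < l} ⊆ ⋃ x, {s : Set α | #s ≤ ρ x} := fun s hs => by
    obtain ⟨x, hx⟩ := hρ.ge hs
    exact Set.mem_iUnion.2 ⟨x, hx.ge⟩
  have hbounded (x : l.out) : #{s : Set α | #s ≤ ρ x} ≤ l :=
    calc #{s : Set α | #s ≤ ρ x} ≤ max #α ℵ₀ ^ ρ x := mk_bounded_set_le α (ρ x)
      _ ≤ l ^ ρ x := power_le_power_right (max_le hα hl)
      _ ≤ l ^< l := le_powerlt l (hρ.le ⟨x, rfl⟩)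
      _ ≤ l := hpow
  calc #{s : Set α | #s < l} ≤ #(⋃ x, {s : Set α | #s ≤ ρ x}) := mk_le_mk_of_subset hcover
    _ ≤ #l.out * ⨆ x, #{s : Set α | #s ≤ ρ x} := mk_iUnion_le _
    _ ≤ l := mul_le_of_le hl (mk_out l).le (ciSup_le' hbounded)

theorem exists_range_subset_Iio {l : Cardinal.{u}} (hl : l.IsRegular) {γ : Type u} (hγ : #γ < l)
    (f : γ → l.ord.ToType) : ∃ x, Set.range f ⊆ Set.Iio x := by
  by_contra! hunbounded
  have hcof : IsCofinal (Set.range f) := fun x => by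
    obtain ⟨y, hy, hxy⟩ := Set.not_subset.1 (hunbounded x)
    exact ⟨y, hy, not_lt.1 hxy⟩
  have := Order.cof_le hcof
  rw [Ordinal.cof_toType, hl.cof_ord] at this
  exact (this.trans mk_range_le).not_gt hγ

theorem GCH.power_le_of_lt (hGCH : GCH.{u}) {l a c : Cardinal.{u}} (hl : ℵ₀ ≤ l) (ha : a < l)
    (hc : c < l) : a ^ c ≤ l := by
  obtain hfin | hinf := lt_or_ge (max a c) ℵ₀
  · rw [max_lt_iff] at hfin
    exact (power_lt_aleph0 hfin.1 hfin.2).le.trans hl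
  · calc a ^ c ≤ max a c ^ c := power_le_power_right (le_max_left a c)
      _ ≤ max a c ^ max a c :=
        power_le_power_left (aleph0_pos.trans_le hinf).ne' (le_max_right a c)
      _ = Order.succ (max a c) := (power_self_eq hinf).trans (hGCH _ hinf)
      _ ≤ l := Order.succ_le_of_lt (max_lt ha hc)

-- By regularity, a function from fewer than `l` points to `l` takes its values below some `x < l`.
theorem GCH.powerlt_self_le (hGCH : GCH.{u}) {l : Cardinal.{u}} (hl : l.IsRegular) :
    l ^< l ≤ l := by
  refine powerlt_le.2 fun c hc => ?_
  induction c using Cardinal.inductionOn with | _ γ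
  have hsurj : Surjective
      fun p : Σ x : l.ord.ToType, γ → Set.Iio x => fun i => (p.2 i : l.ord.ToType) := fun f => by
    obtain ⟨x, hx⟩ := exists_range_subset_Iio hl hc f
    exact ⟨⟨x, fun i => ⟨f i, hx ⟨i, rfl⟩⟩⟩, rfl⟩
  calc l ^ #γ = #(γ → l.ord.ToType) := by simp
    _ ≤ #(Σ x : l.ord.ToType, γ → Set.Iio x) := mk_le_of_surjective hsurj
    _ = sum fun x : l.ord.ToType => #(Set.Iio x) ^ #γ := by simp
    _ ≤ sum fun _ : l.ord.ToType => l :=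
      sum_le_sum _ _ fun x => hGCH.power_le_of_lt hl.aleph0_le
        ((mk_Iio_lt x (by simp)).trans_eq (mk_ord_toType l)) hc
    _ = l := by simp [mul_eq_self hl.aleph0_le]

end Cardinals

section Systems

theorem mk_freeGroup_le (α : Type u) : #(FreeGroup α) ≤ max #α ℵ₀ := by
  cases isEmpty_or_nonempty α
  · exact (mk_le_aleph0 (α := FreeGroup α)).trans (le_max_right _ _)
  · exact (mk_freeGroup α).le

variable {α β G H : Type*} [Group G] [Group H]

theorem exists_finite_mem_closure_of (w : FreeGroup α) :
    ∃ Q : Set α, Q.Finite ∧ w ∈ Subgroup.closure (FreeGroup.of '' Q) := by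
  induction w using FreeGroup.induction_on with
  | C1 => exact ⟨∅, Set.finite_empty, one_mem _⟩
  | of a => exact ⟨{a}, Set.finite_singleton a, Subgroup.subset_closure ⟨a, rfl, rfl⟩⟩
  | inv_of a ih => exact ih.imp fun Q hQ => ⟨hQ.1, inv_mem hQ.2⟩
  | mul v w ihv ihw =>
    obtain ⟨P, hP, hv⟩ := ihv
    obtain ⟨Q, hQ, hw⟩ := ihw
    refine ⟨P ∪ Q, hP.union hQ, mul_mem ?_ ?_⟩
    · exact Subgroup.closure_mono (Set.image_mono Set.subset_union_left) hv
    · exact Subgroup.closure_mono (Set.image_mono Set.subset_union_right) hw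

theorem exists_subset_closure_of_mk_lt {α : Type u} {l : Cardinal.{u}} (hl : ℵ₀ ≤ l)
    {T : Set (FreeGroup α)} (hT : #T < l) :
    ∃ Q : Set α, #Q < l ∧ T ⊆ Subgroup.closure (FreeGroup.of '' Q) := by
  choose F hF hmem using exists_finite_mem_closure_of (α := α)
  refine ⟨⋃ w ∈ T, F w, mk_biUnion_lt_of_finite hl hT hF, fun w hw => ?_⟩
  exact Subgroup.closure_mono (Set.image_mono (Set.subset_biUnion_of_mem hw)) (hmem w)

/-- The assignment `a` of group elements to letters solves the system consisting of the equations
`w = 1` for `w ∈ E` and the inequations `w ≠ 1` for `w ∈ N`. -/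
def Solves (E N : Set (FreeGroup α)) (a : α → G) : Prop :=
  (∀ w ∈ E, FreeGroup.lift a w = 1) ∧ ∀ w ∈ N, FreeGroup.lift a w ≠ 1

variable {E N : Set (FreeGroup α)}

theorem Solves.congr {Q : Set α} {a b : α → G} (h : Solves E N a)
    (hQ : E ∪ N ⊆ Subgroup.closure (FreeGroup.of '' Q)) (hab : Set.EqOn a b Q) :
    Solves E N b := by
  have hlift : Set.EqOn (FreeGroup.lift a) (FreeGroup.lift b) (E ∪ N) := by
    refine (MonoidHom.eqOn_closure ?_).mono hQ
    rintro _ ⟨x, hx, rfl⟩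
    simpa using hab hx
  exact ⟨fun w hw => hlift (.inl hw) ▸ h.1 w hw, fun w hw => hlift (.inr hw) ▸ h.2 w hw⟩

theorem solves_comp_iff {f : G →* H} (hf : Injective f) {a : α → G} :
    Solves E N (f ∘ a) ↔ Solves E N a := by
  have hlift (w : FreeGroup α) : FreeGroup.lift (f ∘ a) w = f (FreeGroup.lift a w) :=
    DFunLike.congr_fun (FreeGroup.ext_hom (FreeGroup.lift (f ∘ a)) (f.comp (FreeGroup.lift a))
      (by simp)) w
  simp only [Solves, hlift, ne_eq, map_eq_one_iff f hf]

theorem solves_image_map_iff (φ : α → β) {a : β → G} :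
    Solves (FreeGroup.map φ '' E) (FreeGroup.map φ '' N) a ↔ Solves E N (a ∘ φ) := by
  have hlift (w : FreeGroup α) :
      FreeGroup.lift a (FreeGroup.map φ w) = FreeGroup.lift (a ∘ φ) w :=
    DFunLike.congr_fun (FreeGroup.ext_hom ((FreeGroup.lift a).comp (FreeGroup.map φ))
      (FreeGroup.lift (a ∘ φ)) (by simp)) w
  simp only [Solves, Set.forall_mem_image, hlift]

end Systems

section Amalgam

universe v w

theorem exists_amalgam_family {ι : Type v} {F : ι → Type w} {S : Type u} [Group S]
    [∀ t, Group (F t)] {φ : ∀ t, S →* F t} (hφ : ∀ t, Injective (φ t)) :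
    ∃ (K : Type (max v w u)) (_ : Group K) (a : ∀ t, F t →* K),
      (∀ t, Injective (a t)) ∧ ∀ s t, (a s).comp (φ s) = (a t).comp (φ t) :=
  ⟨Monoid.PushoutI φ, inferInstance, Monoid.PushoutI.of, Monoid.PushoutI.of_injective hφ,
    fun s t => (Monoid.PushoutI.of_comp_eq_base s).trans (Monoid.PushoutI.of_comp_eq_base t).symm⟩

theorem exists_amalgam {S G H : Type u} [Group S] [Group G] [Group H] {i : S →* G} {j : S →* H}
    (hi : Injective i) (hj : Injective j) :
    ∃ (K : Type u) (_ : Group K) (a : G →* K) (b : H →* K),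
      Injective a ∧ Injective b ∧ a.comp i = b.comp j := by
  let F : Bool → Type u := fun t => cond t G H
  let _ : ∀ t : Bool, Group (F t) := Bool.rec ‹Group H› ‹Group G›
  let φ : ∀ t : Bool, S →* F t := Bool.rec j i
  have hφ : ∀ t : Bool, Injective (φ t) := Bool.rec hj hi
  obtain ⟨K, _, a, ha, hab⟩ := exists_amalgam_family hφ
  exact ⟨K, _, a true, a false, ha true, ha false, hab true false⟩

theorem IsKappaEC.exists_solves_of_solves {κ : Cardinal.{u}} {S G H X : Type u} [Group S]
    [Group G] [Group H] (hG : IsKappaEC κ G) {j : S →* G} (hj : Injective j)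
    {i : S →* H} (hi : Injective i) {E N : Set (FreeGroup (S ⊕ X))} (hE : #E < κ) (hN : #N < κ)
    {v : X → H} (hv : Solves E N (Sum.elim i v)) : ∃ u : X → G, Solves E N (Sum.elim j u) := by
  obtain ⟨K, _, a, b, ha, hb, hab⟩ := exists_amalgam hj hi
  let φ : S ⊕ X → G ⊕ X := Sum.map j id
  have hK : Solves E N (Sum.elim a (b ∘ v) ∘ φ) := by
    rw [← solves_comp_iff hb] at hv
    convert hv using 1
    ext (s | x)
    · exact DFunLike.congr_fun hab s
    · rfl
  obtain ⟨u, hu⟩ := hG X (FreeGroup.map φ '' E) (FreeGroup.map φ '' N)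
    (mk_image_le.trans_lt hE) (mk_image_le.trans_lt hN)
    ⟨K, _, a, ha, b ∘ v, (solves_image_map_iff φ).2 hK⟩
  have : Solves E N (Sum.elim id u ∘ φ) := (solves_image_map_iff φ).1 hu
  exact ⟨u, by simpa [φ, Sum.elim_comp_map] using this⟩

end Amalgam

section OperationClosure

/-- The set `S` is closed under the operations `op i`, `i ∈ I`, where `op i` has arity `β i`. -/
def IsClosedUnder {G ι : Type*} {β : ι → Type*} (op : ∀ i, (β i → G) → G) (I : Set ι)
    (S : Set G) : Prop :=
  ∀ i ∈ I, ∀ f : β i → G, (∀ b, f b ∈ S) → op i f ∈ S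

variable {G ι : Type*} [Group G] {β : ι → Type*} (op : ∀ i, (β i → G) → G)

/-- The smallest subgroup of `G` that contains `A` and is closed under the operations `op i`,
`i ∈ I`. -/
def opClosure (I : Set ι) (A : Set G) : Subgroup G :=
  sInf {S | A ⊆ S ∧ IsClosedUnder op I S}

variable {op} {I J : Set ι} {A B : Set G}

theorem subset_opClosure : A ⊆ opClosure op I A := by
  simp only [opClosure, Subgroup.coe_sInf]
  exact Set.subset_iInter₂ fun S hS => hS.1

theorem isClosedUnder_opClosure : IsClosedUnder op I (opClosure op I A : Set G) := by
  intro i hi f hf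
  refine Subgroup.mem_sInf.2 fun S hS => hS.2 i hi f fun b => ?_
  exact Subgroup.mem_sInf.1 (hf b) S hS

theorem opClosure_mono (hIJ : I ⊆ J) (hAB : A ⊆ B) : opClosure op I A ≤ opClosure op J B :=
  sInf_le ⟨hAB.trans subset_opClosure, fun i hi => isClosedUnder_opClosure i (hIJ hi)⟩

end OperationClosure

section OperationClosureCardinality

-- The closure is the set of values of the terms, i.e. of a W-type.
theorem exists_isClosedUnder_univ_mk_le {G ι : Type u} {β : ι → Type u} (op : ∀ i, (β i → G) → G)
    {l : Cardinal.{u}} (hl : ℵ₀ ≤ l) (hι : #ι ≤ l) (hβ : ∀ i, l ^ #(β i) ≤ l) {A : Set G}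
    (hA : #A ≤ l) : ∃ T : Set G, A ⊆ T ∧ IsClosedUnder op Set.univ T ∧ #T ≤ l := by
  let arity : A ⊕ ι → Type u := Sum.elim (fun _ => PEmpty) β
  let value : WType arity → G := WType.elim G fun
    | ⟨Sum.inl a, _⟩ => a
    | ⟨Sum.inr i, f⟩ => op i f
  refine ⟨Set.range value, fun a ha => ⟨.mk (Sum.inl ⟨a, ha⟩) PEmpty.elim, rfl⟩,
    fun i _ f hf => ?_, mk_range_le.trans (WType.cardinalMk_le_of_le ?_)⟩
  · choose t ht using hf
    exact ⟨.mk (Sum.inr i) t, congrArg (op i) (funext ht)⟩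
  · have harity : ∀ s, l ^ #(arity s) ≤ l :=
      Sum.rec (fun _ => by simpa [arity] using one_le_aleph0.trans hl) hβ
    calc (sum fun s => l ^ #(arity s)) ≤ sum fun _ : A ⊕ ι => l := sum_le_sum _ _ harity
      _ = (#A + #ι) * l := by simp
      _ ≤ l := mul_le_of_le hl (add_le_of_le hl hA hι) le_rfl

theorem mk_opClosure_le {G ι : Type u} [Group G] {β : ι → Type u} {op : ∀ i, (β i → G) → G}
    {I : Set ι} {A : Set G} {l : Cardinal.{u}} (hl : ℵ₀ ≤ l) (hI : #I ≤ l)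
    (hβ : ∀ i ∈ I, l ^ #(β i) ≤ l) (hA : #A ≤ l) : #(opClosure op I A) ≤ l := by
  let arity : Option I → Type u := fun o => o.elim (ULift Bool) fun i => β i
  let op' : ∀ o, (arity o → G) → G
    | none => fun f => f ⟨true⟩ * (f ⟨false⟩)⁻¹
    | some i => op i
  obtain ⟨T, hAT, hT, hTl⟩ := exists_isClosedUnder_univ_mk_le op' hl (A := insert 1 A)
    (by simpa using add_le_of_le hl hI (one_le_aleph0.trans hl))
    (by
      rintro (_ | i)
      · exact (congrArg (l ^ ·) (by simp [arity])).trans_le (power_nat_le (n := 2) hl)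
      · exact hβ i i.2)
    (mk_insert_le.trans (add_le_of_le hl hA (one_le_aleph0.trans hl)))
  have hdiv : ∀ x ∈ T, ∀ y ∈ T, x * y⁻¹ ∈ T := fun x hx y hy =>
    hT none trivial (fun b => cond b.down x y) (by rintro ⟨_ | _⟩ <;> assumption)
  let S : Subgroup G := Subgroup.ofDiv T ⟨1, hAT (Set.mem_insert 1 A)⟩ hdiv
  have hS : opClosure op I A ≤ S :=
    sInf_le ⟨(Set.subset_insert 1 A).trans hAT, fun i hi => hT (some ⟨i, hi⟩) trivial⟩
  exact (mk_le_mk_of_subset hS).trans hTl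

end OperationClosureCardinality

section Templates

variable {ι : Type u}

/-- A system of equations `w = 1` (`w ∈ eqs`) and inequations `w ≠ 1` (`w ∈ ineqs`) in which the
coefficients (left summand) and the unknowns (right summand) are letters of an abstract alphabet,
together with one distinguished unknown. The alphabet is given by its index in a family of types of
cardinalities `ρ`, which keeps the type of all templates in the universe `u`. -/
structure SystemTemplate (ρ : ι → Cardinal.{u}) where
  alphabet : ι
  eqs : Set (FreeGroup ((ρ alphabet).out ⊕ (ρ alphabet).out))
  ineqs : Set (FreeGroup ((ρ alphabet).out ⊕ (ρ alphabet).out))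
  unknown : (ρ alphabet).out

namespace SystemTemplate

variable {ρ : ι → Cardinal.{u}} {G : Type u} [Group G]

/-- The value of the distinguished unknown in a solution, chosen once and for all, of the system
obtained by substituting `c` for the coefficient letters (arbitrary if there is no solution). -/
noncomputable def solution (t : SystemTemplate ρ) (c : (ρ t.alphabet).out → G) : G :=
  Classical.epsilon (fun v => Solves t.eqs t.ineqs (Sum.elim c v)) t.unknown

variable (ρ) in
/-- The templates of size less than `l`. -/
def below (l : Cardinal.{u}) : Set (SystemTemplate ρ) :=
  {t | ρ t.alphabet < l ∧ #t.eqs < l ∧ #t.ineqs < l}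

theorem below_mono {l m : Cardinal.{u}} (hlm : l ≤ m) : below ρ l ⊆ below ρ m :=
  fun _ ht => ⟨ht.1.trans_le hlm, ht.2.1.trans_le hlm, ht.2.2.trans_le hlm⟩

theorem mk_below_le {l : Cardinal.{u}} (hl : ℵ₀ ≤ l) (hpow : l ^< l ≤ l)
    (hρ : #{x | ρ x < l} ≤ l) : #(below ρ l) ≤ l := by
  let Word : ι → Type u := fun x => FreeGroup ((ρ x).out ⊕ (ρ x).out)
  let Code : {x | ρ x < l} → Type u := fun x =>
    {E : Set (Word x) | #E < l} × {N : Set (Word x) | #N < l} × (ρ x).out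
  let decode : (Σ x, Code x) → below ρ l := fun p =>
    ⟨⟨p.1, p.2.1, p.2.2.1, p.2.2.2⟩, p.1.2, p.2.1.2, p.2.2.1.2⟩
  have hdecode : Surjective decode := fun ⟨t, ht⟩ =>
    ⟨⟨⟨t.alphabet, ht.1⟩, ⟨t.eqs, ht.2.1⟩, ⟨t.ineqs, ht.2.2⟩, t.unknown⟩, rfl⟩
  have hCode (x : {x | ρ x < l}) : #(Code x) ≤ l := by
    have hWord : #(Word x) ≤ l := by
      refine (mk_freeGroup_le _).trans (max_le ?_ hl)
      simpa using add_le_of_le hl x.2.le x.2.le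
    have hSets := mk_setOf_mk_lt_le hl hpow hWord
    simp only [Code, mk_prod, lift_id, mk_out]
    exact mul_le_of_le hl hSets (mul_le_of_le hl hSets x.2.le)
  calc #(below ρ l) ≤ #(Σ x, Code x) := mk_le_of_surjective hdecode
    _ = sum fun x => #(Code x) := mk_sigma Code
    _ ≤ sum fun _ : {x | ρ x < l} => l := sum_le_sum _ _ hCode
    _ ≤ l := by simpa using mul_le_of_le hl hρ le_rfl

end SystemTemplate

theorem exists_injOn_of_mk_le {α β : Type u} [Nonempty β] {s : Set α} (h : #s ≤ #β) :
    ∃ e : α → β, Set.InjOn e s := by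
  obtain ⟨f⟩ := h
  refine ⟨extend Subtype.val f (Classical.arbitrary _), Set.injOn_iff_injective.2 ?_⟩
  convert f.injective using 1
  exact funext fun x => Subtype.val_injective.extend_apply _ _ x

theorem exists_eqOn_comp_of_injOn {α β γ : Type*} [Nonempty γ] {s : Set α} {e : α → β}
    (he : Set.InjOn e s) (v : α → γ) : ∃ v' : β → γ, Set.EqOn (v' ∘ e) v s :=
  ⟨extend (s.domRestrict e) (s.domRestrict v) (Classical.arbitrary _), fun x hx =>
    he.injective.extend_apply (s.domRestrict v) _ ⟨x, hx⟩⟩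

theorem exists_solves_of_isClosedUnder {ρ : ι → Cardinal.{u}} {l : Cardinal.{u}} (hl : ℵ₀ ≤ l)
    (hρ : Set.Iio l ⊆ Set.range ρ) {G : Type u} [Group G] {S : Subgroup G}
    (hS : IsClosedUnder SystemTemplate.solution (SystemTemplate.below ρ l) (S : Set G))
    {X : Type u} {E N : Set (FreeGroup (S ⊕ X))} (hE : #E < l) (hN : #N < l) {v : X → G}
    (hv : Solves E N (Sum.elim S.subtype v)) :
    ∃ u : X → S, Solves E N (Sum.elim S.subtype (S.subtype ∘ u)) := by
  obtain ⟨Q, hQl, hQ⟩ := exists_subset_closure_of_mk_lt hl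
    ((mk_union_le E N).trans_lt (add_lt_of_lt hl hE hN))
  have hQl' : #Q + 1 < l := add_lt_of_lt hl hQl (one_lt_aleph0.trans_le hl)
  obtain ⟨x, hx⟩ := hρ hQl'
  have hQx : #Q ≤ #(ρ x).out := by simp [hx]
  have : Nonempty (ρ x).out := mk_ne_zero_iff.1 (by simp [hx])
  obtain ⟨e, he⟩ := exists_injOn_of_mk_le
    ((mk_preimage_of_injective _ Q Sum.inl_injective).trans hQx)
  obtain ⟨d, hd⟩ := exists_injOn_of_mk_le
    ((mk_preimage_of_injective _ Q Sum.inr_injective).trans hQx)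
  obtain ⟨c, hc⟩ := exists_eqOn_comp_of_injOn he id
  obtain ⟨v', hv'⟩ := exists_eqOn_comp_of_injOn hd v
  let φ : S ⊕ X → (ρ x).out ⊕ (ρ x).out := Sum.map e d
  let c' : (ρ x).out → G := S.subtype ∘ c
  let template : (ρ x).out → SystemTemplate ρ :=
    SystemTemplate.mk x (FreeGroup.map φ '' E) (FreeGroup.map φ '' N)
  have htemplate : ∃ u, Solves (FreeGroup.map φ '' E) (FreeGroup.map φ '' N) (Sum.elim c' u) := by
    refine ⟨v', (solves_image_map_iff φ).2 (hv.congr hQ ?_)⟩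
    rintro (s | y) hy
    · exact congrArg S.subtype (hc hy).symm
    · exact (hv' hy).symm
  have hsol : Solves E N (Sum.elim c' (fun y => (template y).solution c') ∘ φ) :=
    (solves_image_map_iff φ).1 (Classical.epsilon_spec htemplate)
  have hmem (y : (ρ x).out) : (template y).solution c' ∈ S :=
    hS (template y) ⟨hx.trans_lt hQl', mk_image_le.trans_lt hE, mk_image_le.trans_lt hN⟩ c'
      fun b => (c b).2
  refine ⟨fun y => ⟨_, hmem (d y)⟩, hsol.congr hQ ?_⟩
  rintro (s | y) hy
  · exact congrArg S.subtype (hc hy)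
  · rfl

theorem IsKappaEC.of_isClosedUnder {ρ : ι → Cardinal.{u}} {κ l : Cardinal.{u}} (hl : ℵ₀ ≤ l)
    (hlκ : l ≤ κ) (hρ : Set.Iio l ⊆ Set.range ρ) {G : Type u} [Group G] (hG : IsKappaEC κ G)
    {S : Subgroup G}
    (hS : IsClosedUnder SystemTemplate.solution (SystemTemplate.below ρ l) (S : Set G)) :
    IsKappaEC l S := by
  rintro X E N hE hN ⟨H, _, i, hi, w, hw⟩
  obtain ⟨v, hv⟩ := hG.exists_solves_of_solves S.subtype_injective hi (hE.trans_le hlκ)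
    (hN.trans_le hlκ) hw
  obtain ⟨u, hu⟩ := exists_solves_of_isClosedUnder hl hρ hS hE hN hv
  refine ⟨u, (solves_comp_iff S.subtype_injective).1 ?_⟩
  rwa [Sum.comp_elim]

end Templates

theorem exists_isRegular_le_of_lt {κ c : Cardinal.{u}} (hκ : ℵ₀ ≤ κ) (hc : c < κ) :
    ∃ lam : Cardinal.{u}, lam.IsRegular ∧ lam ≤ κ ∧ c < lam := by
  by_cases hreg : κ.IsRegular
  · exact ⟨κ, hreg, le_rfl, hc⟩
  · have hκ' : ℵ₀ < κ := hκ.lt_of_ne fun h => hreg (h ▸ isRegular_aleph0)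
    refine ⟨Order.succ (max c ℵ₀), isRegular_succ (le_max_right c ℵ₀), ?_, ?_⟩
    · exact Order.succ_le_of_lt (max_lt hc hκ')
    · exact Order.lt_succ_of_le (le_max_left c ℵ₀)

theorem stmt_12_general (κ : Cardinal.{u}) (hκ : ℵ₀ ≤ κ) (G : Type u) [Group G]
    (hG : IsKappaEC κ G) (hcard : #G = κ) :
    ∃ Gs : Cardinal.{u} → Subgroup G,
      Monotone Gs ∧
      (∀ lam, ℵ₀ ≤ lam → lam ≤ κ → lam ^< lam ≤ lam →
        IsKappaEC lam (Gs lam) ∧ #(Gs lam) = lam) ∧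
      (∀ x : G, ∃ lam : Cardinal.{u}, lam.IsRegular ∧ lam ≤ κ ∧ x ∈ Gs lam) ∧
      Gs κ = ⊤ := by
  subst hcard
  obtain ⟨ρ, hrange, hρ⟩ := exists_rank G
  have hlt (x : G) : ρ x < #G := hrange.le ⟨x, rfl⟩
  let Gs (lam : Cardinal.{u}) : Subgroup G :=
    opClosure SystemTemplate.solution (SystemTemplate.below ρ lam) {x | ρ x < lam}
  have subset_Gs (lam) : {x | ρ x < lam} ⊆ Gs lam := subset_opClosure
  refine ⟨Gs, fun lam mu h => ?_, fun lam hlam hle hpow => ⟨?_, ?_⟩, fun x => ?_, ?_⟩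
  · exact opClosure_mono (SystemTemplate.below_mono h) fun x hx => lt_of_lt_of_le hx h
  · exact hG.of_isClosedUnder hlam hle (hrange ▸ Set.Iio_subset_Iio hle) isClosedUnder_opClosure
  · refine le_antisymm ?_ ((hρ lam hle).ge.trans (mk_le_mk_of_subset (subset_Gs lam)))
    refine mk_opClosure_le hlam (SystemTemplate.mk_below_le hlam hpow (hρ lam hle).le)
      (fun t ht => ?_) (hρ lam hle).le
    exact (le_powerlt lam ((mk_out _).trans_lt ht.1)).trans hpow
  · obtain ⟨lam, hreg, hle, hx⟩ := exists_isRegular_le_of_lt hκ (hlt x)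
    exact ⟨lam, hreg, hle, subset_Gs lam hx⟩
  · exact eq_top_iff.2 fun x _ => subset_Gs #G (hlt x)

/-- Under GCH, a `κ`-existentially closed group `G` of cardinality `κ` (`κ` uncountable)
has a chain of subgroups `{G_λ}`, indexed by the regular cardinals `λ ≤ κ`, increasing
with `λ`, with union `G`, such that each `G_λ` is a `λ`-existentially closed group of
cardinality `λ`, and `G_κ = G`. -/
theorem stmt_12 (hGCH : GCH.{u}) (κ : Cardinal.{u}) (hκ : Cardinal.aleph0 < κ)
    (G : Type u) [Group G] (hG : IsKappaEC κ G) (hcard : Cardinal.mk G = κ) :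
    ∃ Gs : Cardinal.{u} → Subgroup G,
      (∀ lam mu : Cardinal.{u}, lam.IsRegular → mu.IsRegular → lam ≤ mu → mu ≤ κ →
        Gs lam ≤ Gs mu) ∧
      (∀ lam : Cardinal.{u}, lam.IsRegular → lam ≤ κ →
        IsKappaEC lam (Gs lam) ∧ Cardinal.mk (Gs lam) = lam) ∧
      (∀ x : G, ∃ lam : Cardinal.{u}, lam.IsRegular ∧ lam ≤ κ ∧ x ∈ Gs lam) ∧
      Gs κ = ⊤ := by
  obtain ⟨Gs, hmono, hEC, hunion, htop⟩ := stmt_12_general κ hκ.le G hG hcard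
  exact ⟨Gs, fun lam mu _ _ h _ => hmono h, fun lam hreg hle =>
    hEC lam hreg.aleph0_le hle (hGCH.powerlt_self_le hreg), hunion, htop⟩
end

section
/- Assume GCH. Let G be a κ-existentially closed group of cardinality λ ≥ κ, and let μ ≤ κ be a regular cardinal. Then G has a local system consisting of μ-existentially closed subgroups of cardinality μ; that is, every finite subset of G is contained in some μ-existentially closed subgroup of cardinality μ, and the family of such subgroups is directed under inclusion. -/
universe u

/-!
Call a subgroup `L` of `G` existentially closed over a subgroup `K` if every small system with
coefficients in `K` that is solvable in `G` is solvable in `L`. Since `2 ^< μ ≤ μ`, a subgroup of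
cardinality at most `μ` has at most `μ` small systems, and adjoining one solution of each solvable
one gives a subgroup of cardinality at most `μ` that is existentially closed over it. Iterating
`μ` times gives a chain; by regularity the coefficients of a small system over its union `K` occur
at one stage, so a solution in `G` can be replaced by one in `K`. Finally, a system over `K` that
is solvable in an overgroup of `K` is solvable in the amalgam of that overgroup with `G`, hence in
`G`, because `G` is existentially closed.
-/

open Cardinal Set

section Cardinality

variable {α ι : Type u} {μ : Cardinal.{u}}

lemma mk_iUnion_le_of_forall_mk_le (hμ : ℵ₀ ≤ μ) (s : ι → Set α) (hι : #ι ≤ μ)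
    (hs : ∀ i, #(s i) ≤ μ) : #(⋃ i, s i) ≤ μ :=
  (mk_iUnion_le s).trans (mul_le_of_le hμ hι (ciSup_le' hs))

lemma mk_union_le_of_mk_le (hμ : ℵ₀ ≤ μ) {s t : Set α} (hs : #s ≤ μ) (ht : #t ≤ μ) :
    #(s ∪ t : Set α) ≤ μ :=
  (mk_union_le s t).trans (add_le_of_le hμ hs ht)

lemma mk_freeGroup_le_s13 (hμ : ℵ₀ ≤ μ) (hα : #α ≤ μ) : #(FreeGroup α) ≤ μ := by
  cases isEmpty_or_nonempty α
  · exact mk_le_aleph0.trans hμ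
  · exact mk_freeGroup α ▸ max_le hα hμ

lemma mk_subgroup_closure_le {G : Type u} [Group G] (hμ : ℵ₀ ≤ μ) {s : Set G} (hs : #s ≤ μ) :
    #(Subgroup.closure s) ≤ μ := by
  rw [FreeGroup.closure_eq_range]
  exact mk_range_le.trans (mk_freeGroup_le_s13 hμ hs)

lemma mk_iSup_subgroup_le {G : Type u} [Group G] (hμ : ℵ₀ ≤ μ) (K : ι → Subgroup G) (hι : #ι ≤ μ)
    (hK : ∀ i, #(K i) ≤ μ) : #(⨆ i, K i : Subgroup G) ≤ μ := by
  rw [Subgroup.iSup_eq_closure]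
  exact mk_subgroup_closure_le hμ (mk_iUnion_le_of_forall_mk_le hμ _ hι hK)

lemma exists_forall_lt_of_mk_lt_cof [LinearOrder α] {s : Set α} (hs : #s < Order.cof α) :
    ∃ t, ∀ x ∈ s, x < t :=
  not_isCofinal_iff.1 fun h => (Order.cof_le h).not_gt hs

lemma cof_ord_toType_of_isRegular (hμ : μ.IsRegular) : Order.cof μ.ord.ToType = μ := by
  rw [Ordinal.cof_toType, hμ.cof_ord]

theorem GCH.two_powerlt_le (hGCH : GCH.{u}) (hμ : ℵ₀ ≤ μ) : 2 ^< μ ≤ μ := by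
  refine powerlt_le.2 fun c hc => ?_
  rcases lt_or_ge c ℵ₀ with hfin | hinf
  · exact (power_lt_aleph0 (natCast_lt_aleph0 (n := 2)) hfin).le.trans hμ
  · exact hGCH c hinf ▸ Order.succ_le_of_lt hc

/-- The subsets of `α` of cardinality less than `μ`, used to index small systems. -/
abbrev SmallSet (μ : Cardinal.{u}) (α : Type u) : Type u := {s : Set α // #s < μ}

lemma mk_smallSet_le (hμ : μ.IsRegular) (hpow : 2 ^< μ ≤ μ) (hα : #α ≤ μ) :
    #(SmallSet μ α) ≤ μ := by
  let T := μ.ord.ToType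
  have hT : #T = μ := mk_ord_toType μ
  have hcof : Order.cof T = μ := cof_ord_toType_of_isRegular hμ
  have hbounded : {s : Set T | #s < μ} ⊆ ⋃ t : T, 𝒫 (Iio t) := fun s hs => by
    obtain ⟨t, ht⟩ := exists_forall_lt_of_mk_lt_cof (hs.trans_eq hcof.symm)
    exact mem_iUnion.2 ⟨t, ht⟩
  have hsegment (t : T) : #(𝒫 (Iio t)) ≤ μ := by
    have hlt : #(Iio t) < μ := by simpa [T] using mk_Iio_lt t (by simp [T])
    exact mk_powerset _ ▸ powerlt_le.1 hpow _ hlt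
  obtain ⟨e⟩ : Nonempty (α ↪ T) := hα.trans_eq hT.symm
  let toSmallSetT (s : SmallSet μ α) : {s : Set T | #s < μ} :=
    ⟨e '' s, mk_image_le.trans_lt s.2⟩
  have hinj : Function.Injective toSmallSetT := fun s t hst =>
    Subtype.ext (e.injective.image_injective (congrArg Subtype.val hst))
  calc #(SmallSet μ α) ≤ #{s : Set T | #s < μ} := mk_le_of_injective hinj
    _ ≤ #(⋃ t : T, 𝒫 (Iio t)) := mk_le_mk_of_subset hbounded
    _ ≤ μ := mk_iUnion_le_of_forall_mk_le hμ.aleph0_le _ hT.le hsegment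

end Cardinality

lemma exists_forall_lt_rel {T α : Type*} [Preorder T] [WellFoundedLT T] (R : α → α → Prop)
    (hR : ∀ (t : T) (g : Iio t → α), ∃ b, ∀ s, R (g s) b) :
    ∃ f : T → α, ∀ s t, s < t → R (f s) (f t) := by
  choose next hnext using hR
  let f : T → α := WellFoundedLT.fix fun t ih => next t fun s => ih s s.2
  have hf (t : T) : f t = next t fun s => f s := WellFoundedLT.fix_eq _ t
  exact ⟨f, fun s t hst => hf t ▸ hnext t (fun s => f s) ⟨s, hst⟩⟩

lemma exists_amalgam_s13 {K G H : Type u} [Group K] [Group G] [Group H] {a : K →* G} {b : K →* H}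
    (ha : Function.Injective a) (hb : Function.Injective b) :
    ∃ (P : Type u) (_ : Group P) (j : G →* P) (k : H →* P),
      Function.Injective j ∧ Function.Injective k ∧ ∀ x, j (a x) = k (b x) := by
  let F : Bool → GrpCat.{u} := fun c => bif c then GrpCat.of H else GrpCat.of G
  let φ : ∀ c, K →* F c := fun c => match c with
    | false => a
    | true => b
  have hφ : ∀ c, Function.Injective (φ c) := fun c => match c with
    | false => ha
    | true => hb
  exact ⟨Monoid.PushoutI φ, inferInstance, Monoid.PushoutI.of (φ := φ) false,
    Monoid.PushoutI.of (φ := φ) true, Monoid.PushoutI.of_injective hφ false,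
    Monoid.PushoutI.of_injective hφ true, fun x =>
      (Monoid.PushoutI.of_apply_eq_base φ false x).trans
        (Monoid.PushoutI.of_apply_eq_base φ true x).symm⟩

section IsSolution

variable {α β P Q : Type*} [Group P] [Group Q]

/-- The assignment `f` of group elements to letters solves the equations `w = 1` for `w ∈ E` and
the inequations `w ≠ 1` for `w ∈ I`. A system with coefficients in `K` and unknowns in `X` is the
case `α = K ⊕ X`, with `f` prescribed on `K`. -/
def IsSolution (f : α → P) (E I : Set (FreeGroup α)) : Prop :=
  (∀ w ∈ E, FreeGroup.lift f w = 1) ∧ ∀ w ∈ I, FreeGroup.lift f w ≠ 1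

lemma isSolution_comp_iff {j : P →* Q} (hj : Function.Injective j) {f : α → P}
    {E I : Set (FreeGroup α)} : IsSolution (j ∘ f) E I ↔ IsSolution f E I := by
  have hlift (w : FreeGroup α) : FreeGroup.lift (j ∘ f) w = j (FreeGroup.lift f w) :=
    (FreeGroup.lift_unique (j.comp (FreeGroup.lift f)) (by simp)).symm
  simp only [IsSolution, hlift, map_eq_one_iff j hj, ne_eq]

lemma isSolution_image_map_iff {r : α → β} {f : β → P} {E I : Set (FreeGroup α)} :
    IsSolution f (FreeGroup.map r '' E) (FreeGroup.map r '' I) ↔ IsSolution (f ∘ r) E I := by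
  have hlift (w : FreeGroup α) :
      FreeGroup.lift f (FreeGroup.map r w) = FreeGroup.lift (f ∘ r) w :=
    FreeGroup.lift_unique ((FreeGroup.lift f).comp (FreeGroup.map r)) (by simp)
  simp only [IsSolution, forall_mem_image, hlift]

lemma isSolution_preimage_map_iff {r : α → β} {f : β → P} {E I : Set (FreeGroup β)}
    (hE : E ⊆ (FreeGroup.map r).range) (hI : I ⊆ (FreeGroup.map r).range) :
    IsSolution (f ∘ r) (FreeGroup.map r ⁻¹' E) (FreeGroup.map r ⁻¹' I) ↔ IsSolution f E I := by
  rw [← isSolution_image_map_iff, image_preimage_eq_of_subset hE, image_preimage_eq_of_subset hI]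

end IsSolution

lemma exists_finite_mem_range_map {α : Type*} (w : FreeGroup α) :
    ∃ W : Set α, W.Finite ∧ w ∈ (FreeGroup.map (Subtype.val : W → α)).range := by
  simp only [FreeGroup.range_map, Subtype.range_coe]
  induction w using FreeGroup.induction_on with
  | C1 => exact ⟨∅, finite_empty, one_mem _⟩
  | of a => exact ⟨{a}, finite_singleton a, Subgroup.subset_closure ⟨a, rfl, rfl⟩⟩
  | inv_of a ih =>
    obtain ⟨W, hW, ha⟩ := ih
    exact ⟨W, hW, inv_mem ha⟩
  | mul x y hx hy =>
    obtain ⟨U, hU, hx⟩ := hx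
    obtain ⟨V, hV, hy⟩ := hy
    exact ⟨U ∪ V, hU.union hV, mul_mem
      (Subgroup.closure_mono (image_mono subset_union_left) hx)
      (Subgroup.closure_mono (image_mono subset_union_right) hy)⟩

lemma exists_small_subset_range_map {α : Type u} {μ : Cardinal.{u}} (hμ : μ.IsRegular)
    {E : Set (FreeGroup α)} (hE : #E < μ) :
    ∃ W : Set α, #W < μ ∧ E ⊆ (FreeGroup.map (Subtype.val : W → α)).range := by
  choose letters hfin hmem using exists_finite_mem_range_map (α := α)
  refine ⟨⋃ w : E, letters w, ?_, fun w hw => ?_⟩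
  · exact mk_iUnion_le_sum_mk.trans_lt
      (sum_lt_of_isRegular hμ hE fun w => (hfin w).lt_aleph0.trans_le hμ.aleph0_le)
  · have hsub : letters w ⊆ ⋃ w : E, letters w := subset_iUnion (fun w : E => letters w) ⟨w, hw⟩
    have hw := hmem w
    simp only [FreeGroup.range_map, Subtype.range_coe] at hw ⊢
    exact Subgroup.closure_mono (image_mono hsub) hw

namespace IsKappaEC

variable {κ μ : Cardinal.{u}} {G : Type u} [Group G]

theorem mono (hG : IsKappaEC κ G) (hle : μ ≤ κ) : IsKappaEC μ G :=
  fun X E I hE hI => hG X E I (hE.trans_le hle) (hI.trans_le hle)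

theorem le_mk (hG : IsKappaEC κ G) : κ ≤ #G := by
  by_contra! hlt
  -- The overgroup `G × FreeGroup PUnit` has an element outside `G`.
  let differs (g : G) : FreeGroup (G ⊕ PUnit.{u + 1}) := .of (.inr ⟨⟩) * (.of (.inl g))⁻¹
  obtain ⟨v, -, hv⟩ := hG PUnit ∅ (range differs) (by simpa using hlt.pos)
    (mk_range_le.trans_lt hlt)
    ⟨G × FreeGroup PUnit.{u + 1}, inferInstance, .inl G _, fun g h => congrArg Prod.fst,
      fun _ => (1, .of ⟨⟩), by simp, by simp [differs, FreeGroup.of_ne_one]⟩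
  exact hv (differs (v ⟨⟩)) ⟨_, rfl⟩ (by simp [differs])

lemma exists_isSolution {K H X : Type u} [Group K] [Group H] (hG : IsKappaEC κ G)
    {a : K →* G} (ha : Function.Injective a) {b : K →* H} (hb : Function.Injective b)
    {E I : Set (FreeGroup (K ⊕ X))} (hE : #E < κ) (hI : #I < κ) {v : X → H}
    (hv : IsSolution (Sum.elim b v) E I) : ∃ v : X → G, IsSolution (Sum.elim a v) E I := by
  obtain ⟨P, _, j, k, hj, hk, hjk⟩ := exists_amalgam_s13 ha hb
  let r : K ⊕ X → G ⊕ X := Sum.map a id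
  have hP : Sum.elim j (k ∘ v) ∘ r = k ∘ Sum.elim b v := by
    rw [Sum.elim_comp_map, Sum.comp_elim]
    exact congrArg₂ Sum.elim (funext hjk) rfl
  have hsol : IsSolution (Sum.elim j (k ∘ v)) (FreeGroup.map r '' E) (FreeGroup.map r '' I) := by
    rwa [isSolution_image_map_iff, hP, isSolution_comp_iff hk]
  obtain ⟨u, hu⟩ := hG X _ _ (mk_image_le.trans_lt hE) (mk_image_le.trans_lt hI)
    ⟨P, inferInstance, j, hj, k ∘ v, hsol⟩
  refine ⟨u, ?_⟩
  have := isSolution_image_map_iff.1 hu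
  rwa [Sum.elim_comp_map] at this

end IsKappaEC

/-- `L` is existentially closed over `K` in `G`: every system of fewer than `μ` equations and
inequations with coefficients in `K` that is solvable in `G` is solvable in `L`. Coefficients and
unknowns share the alphabet `α`, which may be taken small: those letters count as coefficients
whose value under the given solution `f` lies in `K`. -/
def IsECOver (μ : Cardinal.{u}) {G : Type u} [Group G] (K L : Subgroup G) : Prop :=
  ∀ (α : Type u) (E I : Set (FreeGroup α)), #α < μ → #E < μ → #I < μ →
    ∀ f : α → G, IsSolution f E I →
      ∃ f' : α → L, IsSolution f' E I ∧ ∀ a, f a ∈ K → (f' a : G) = f a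

namespace IsECOver

variable {μ : Cardinal.{u}} {G : Type u} [Group G] {K K' L L' : Subgroup G}

lemma mono (h : IsECOver μ K L) (hK : K' ≤ K) (hL : L ≤ L') : IsECOver μ K' L' := by
  intro α E I hα hE hI f hf
  obtain ⟨f', hf', hfix⟩ := h α E I hα hE hI f hf
  exact ⟨Subgroup.inclusion hL ∘ f',
    (isSolution_comp_iff (Subgroup.inclusion_injective hL)).2 hf', fun a ha => hfix a (hK ha)⟩

lemma iSup_left {T : Type u} [LinearOrder T] (hT : μ ≤ Order.cof T) {B : T → Subgroup G}
    (hB : Monotone B) (h : ∀ t, IsECOver μ (B t) L) : IsECOver μ (⨆ t, B t) L := by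
  intro α E I hα hE hI f hf
  have : Nonempty T := Order.cof_ne_zero_iff.1 (hα.trans_le hT).pos.ne'
  have hstage (a : {a // f a ∈ ⨆ t, B t}) : ∃ t, f a ∈ B t :=
    (Subgroup.mem_iSup_of_directed hB.directed_le).1 a.2
  choose stage hstage using hstage
  obtain ⟨t, ht⟩ : ∃ t, ∀ s ∈ range stage, s < t :=
    exists_forall_lt_of_mk_lt_cof
      (mk_range_le.trans_lt ((mk_subtype_le _).trans_lt (hα.trans_le hT)))
  obtain ⟨f', hf', hfix⟩ := h t α E I hα hE hI f hf
  exact ⟨f', hf', fun a ha => hfix a (hB (ht _ ⟨⟨a, ha⟩, rfl⟩).le (hstage ⟨a, ha⟩))⟩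

lemma isKappaEC (hμ : μ.IsRegular) (hG : IsKappaEC μ G) (hK : IsECOver μ K K) :
    IsKappaEC μ K := by
  intro X E I hE hI ⟨H, _, i, hi, vH, hvH⟩
  obtain ⟨v, hv⟩ : ∃ v : X → G, IsSolution (Sum.elim K.subtype v) E I :=
    hG.exists_isSolution K.subtype_injective hi hE hI hvH
  obtain ⟨W, hW, hEI⟩ := exists_small_subset_range_map hμ
    ((mk_union_le E I).trans_lt (add_lt_of_lt hμ.aleph0_le hE hI))
  have hEW := subset_union_left.trans hEI
  have hIW := subset_union_right.trans hEI
  have hinj : Function.Injective (FreeGroup.map (Subtype.val : W → K ⊕ X)) :=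
    FreeGroup.map_injective Subtype.val_injective
  obtain ⟨f, hf, hfix⟩ := hK W _ _ hW ((mk_preimage_of_injective _ E hinj).trans_lt hE)
    ((mk_preimage_of_injective _ I hinj).trans_lt hI) _ ((isSolution_preimage_map_iff hEW hIW).2 hv)
  let u : X → K := Function.extend Subtype.val f 1 ∘ Sum.inr
  have hu : Sum.elim id u ∘ (Subtype.val : W → K ⊕ X) = f := by
    funext ⟨a, ha⟩
    cases a with
    | inl a => exact Subtype.ext (hfix ⟨_, ha⟩ a.2).symm
    | inr x => exact Subtype.val_injective.extend_apply f 1 ⟨_, ha⟩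
  exact ⟨u, (isSolution_preimage_map_iff hEW hIW).1 (hu ▸ hf)⟩

end IsECOver

/-- A small system over the alphabet `V` whose coefficients lie in `K`: its equations, its
inequations, and the coefficients, encoded as pairs of a letter and its prescribed value. -/
abbrev SmallSystem (μ : Cardinal.{u}) (V : Type u) {G : Type u} [Group G] (K : Subgroup G) :
    Type u :=
  SmallSet μ (FreeGroup V) × SmallSet μ (FreeGroup V) × SmallSet μ (V × K)

section SmallSystem

variable {μ : Cardinal.{u}} {V G : Type u} [Group G] {K L : Subgroup G}

/-- The assignment `v` solves the system `s` and takes the prescribed values. -/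
def SmallSystem.IsSolvedBy (s : SmallSystem μ V K) (v : V → G) : Prop :=
  IsSolution v s.1.1 s.2.1.1 ∧ ∀ q ∈ s.2.2.1, v q.1 = q.2

lemma mk_smallSystem_le (hμ : μ.IsRegular) (hpow : 2 ^< μ ≤ μ) (hV : #V ≤ μ) (hK : #K ≤ μ) :
    #(SmallSystem μ V K) ≤ μ := by
  have hwords : #(SmallSet μ (FreeGroup V)) ≤ μ :=
    mk_smallSet_le hμ hpow (mk_freeGroup_le_s13 hμ.aleph0_le hV)
  have hcoeffs : #(SmallSet μ (V × K)) ≤ μ :=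
    mk_smallSet_le hμ hpow (mul_def V K ▸ mul_le_of_le hμ.aleph0_le hV hK)
  simp only [SmallSystem, ← mul_def]
  exact mul_le_of_le hμ.aleph0_le hwords (mul_le_of_le hμ.aleph0_le hwords hcoeffs)

lemma isECOver_of_forall_smallSystem (hV : μ ≤ #V)
    (h : ∀ (s : SmallSystem μ V K) (v : V → G), s.IsSolvedBy v →
      ∃ v' : V → L, s.IsSolvedBy (L.subtype ∘ v')) : IsECOver μ K L := by
  intro α E I hα hE hI f hf
  obtain ⟨e⟩ : Nonempty (α ↪ V) := hα.le.trans hV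
  let coeff (a : {a // f a ∈ K}) : V × K := (e a, ⟨f a, a.2⟩)
  let s : SmallSystem μ V K :=
    (⟨FreeGroup.map e '' E, mk_image_le.trans_lt hE⟩,
      ⟨FreeGroup.map e '' I, mk_image_le.trans_lt hI⟩,
      ⟨range coeff, mk_range_le.trans_lt ((mk_subtype_le _).trans_lt hα)⟩)
  have hs : s.IsSolvedBy (Function.extend e f 1) := by
    refine ⟨isSolution_image_map_iff.2 ?_, ?_⟩
    · rwa [Function.extend_comp e.injective]
    · rintro _ ⟨a, rfl⟩
      exact e.injective.extend_apply f 1 a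
  obtain ⟨v, hv, hcoeff⟩ := h s _ hs
  exact ⟨v ∘ e, isSolution_image_map_iff.1 ((isSolution_comp_iff L.subtype_injective).1 hv),
    fun a ha => hcoeff _ ⟨⟨a, ha⟩, rfl⟩⟩

end SmallSystem

section Chain

variable {μ : Cardinal.{u}} {G : Type u} [Group G]

lemma exists_le_isECOver (hμ : μ.IsRegular) (hpow : 2 ^< μ ≤ μ) {K : Subgroup G} (hK : #K ≤ μ) :
    ∃ L : Subgroup G, #L ≤ μ ∧ K ≤ L ∧ IsECOver μ K L := by
  let V := μ.ord.ToType
  have hV : #V = μ := mk_ord_toType μ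
  let sol (s : SmallSystem μ V K) : V → G := Classical.epsilon s.IsSolvedBy
  let S : Set G := K ∪ ⋃ s, range (sol s)
  have hS : #S ≤ μ := mk_union_le_of_mk_le hμ.aleph0_le hK <|
    mk_iUnion_le_of_forall_mk_le hμ.aleph0_le _ (mk_smallSystem_le hμ hpow hV.le hK)
      fun s => mk_range_le.trans hV.le
  have hsol (s : SmallSystem μ V K) (x : V) : sol s x ∈ Subgroup.closure S :=
    Subgroup.subset_closure (Or.inr (mem_iUnion.2 ⟨s, x, rfl⟩))
  refine ⟨Subgroup.closure S, mk_subgroup_closure_le hμ.aleph0_le hS,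
    subset_union_left.trans Subgroup.subset_closure, ?_⟩
  exact isECOver_of_forall_smallSystem hV.ge fun s v hv =>
    ⟨fun x => ⟨sol s x, hsol s x⟩, Classical.epsilon_spec ⟨v, hv⟩⟩

lemma exists_chain_isECOver (hμ : μ.IsRegular) (hpow : 2 ^< μ ≤ μ) {S : Set G} (hS : #S ≤ μ) :
    ∃ B : μ.ord.ToType → Subgroup G, (∀ t, S ⊆ B t ∧ #(B t) ≤ μ) ∧
      ∀ s t, s < t → B s ≤ B t ∧ IsECOver μ (B s) (B t) := by
  let R (K L : {K : Subgroup G // S ⊆ K ∧ #K ≤ μ}) : Prop := K.1 ≤ L ∧ IsECOver μ K.1 L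
  suffices hR : ∀ (t : μ.ord.ToType) (g : Iio t → {K : Subgroup G // S ⊆ K ∧ #K ≤ μ}),
      ∃ L, ∀ s, R (g s) L by
    obtain ⟨B, hB⟩ := exists_forall_lt_rel R hR
    exact ⟨fun t => B t, fun t => (B t).2, hB⟩
  intro t g
  let A : Set G := S ∪ ⋃ s, (g s : Set G)
  have hgA (s) : (g s : Set G) ⊆ A :=
    (subset_iUnion (fun s => (g s : Set G)) s).trans subset_union_right
  have hA : #A ≤ μ := mk_union_le_of_mk_le hμ.aleph0_le hS <|
    mk_iUnion_le_of_forall_mk_le hμ.aleph0_le _ ((mk_set_le _).trans_eq (mk_ord_toType μ))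
      fun s => (g s).2.2
  obtain ⟨L, hL, hAL, hec⟩ := exists_le_isECOver hμ hpow (mk_subgroup_closure_le hμ.aleph0_le hA)
  have hgcl (s) : (g s).1 ≤ Subgroup.closure A := (hgA s).trans Subgroup.subset_closure
  have hSL : S ⊆ L := subset_union_left.trans (Subgroup.subset_closure.trans hAL)
  exact ⟨⟨L, hSL, hL⟩, fun s => ⟨(hgcl s).trans hAL, hec.mono (hgcl s) le_rfl⟩⟩

lemma exists_superset_isECOver_self (hμ : μ.IsRegular) (hpow : 2 ^< μ ≤ μ) {S : Set G}
    (hS : #S ≤ μ) : ∃ K : Subgroup G, S ⊆ K ∧ #K ≤ μ ∧ IsECOver μ K K := by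
  obtain ⟨B, hB, hchain⟩ := exists_chain_isECOver hμ hpow hS
  have := noMaxOrder hμ.aleph0_le
  have hmono : Monotone B := monotone_iff_forall_lt.2 fun s t hst => (hchain s t hst).1
  have hcof : Order.cof μ.ord.ToType = μ := cof_ord_toType_of_isRegular hμ
  obtain ⟨t₀⟩ : Nonempty μ.ord.ToType := Order.cof_ne_zero_iff.1 (hcof.trans_ne hμ.ne_zero)
  refine ⟨⨆ t, B t, (hB t₀).1.trans (le_iSup B t₀), ?_, ?_⟩
  · exact mk_iSup_subgroup_le hμ.aleph0_le B (mk_ord_toType μ).le fun t => (hB t).2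
  · refine IsECOver.iSup_left hcof.ge hmono fun t => ?_
    obtain ⟨t', ht⟩ := exists_gt t
    exact (hchain t t' ht).2.mono le_rfl (le_iSup B t')

theorem IsKappaEC.exists_subgroup_superset (hμ : μ.IsRegular) (hpow : 2 ^< μ ≤ μ)
    (hG : IsKappaEC μ G) {S : Set G} (hS : #S ≤ μ) :
    ∃ K : Subgroup G, (IsKappaEC μ K ∧ #K = μ) ∧ S ⊆ K := by
  obtain ⟨K, hSK, hK, hself⟩ := exists_superset_isECOver_self hμ hpow hS
  have hec : IsKappaEC μ K := hself.isKappaEC hμ hG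
  exact ⟨K, ⟨hec, hK.antisymm hec.le_mk⟩, hSK⟩

end Chain

theorem stmt_13_general {μ : Cardinal.{u}} (hμ : μ.IsRegular) (hpow : 2 ^< μ ≤ μ)
    {G : Type u} [Group G] (hG : IsKappaEC μ G) :
    (∀ F : Finset G, ∃ K : Subgroup G, (IsKappaEC μ K ∧ #K = μ) ∧ (F : Set G) ⊆ K) ∧
    DirectedOn (· ≤ ·) {K : Subgroup G | IsKappaEC μ K ∧ #K = μ} := by
  refine ⟨fun F => hG.exists_subgroup_superset hμ hpow
    (F.finite_toSet.lt_aleph0.le.trans hμ.aleph0_le), fun K₁ h₁ K₂ h₂ => ?_⟩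
  obtain ⟨K, hK, hsub⟩ := hG.exists_subgroup_superset hμ hpow
    (mk_union_le_of_mk_le hμ.aleph0_le h₁.2.le h₂.2.le)
  exact ⟨K, hK, subset_union_left.trans hsub, subset_union_right.trans hsub⟩

/-- Under GCH, if `G` is a `κ`-existentially closed group of cardinality `λ ≥ κ` and
`μ ≤ κ` is a regular cardinal, then `G` has a local system of `μ`-existentially closed
subgroups of cardinality `μ`: every finite subset of `G` lies in such a subgroup, and the
family of such subgroups is directed under inclusion. -/
theorem stmt_13 (hGCH : GCH.{u}) (κ mu : Cardinal.{u}) (hmu : mu.IsRegular) (hle : mu ≤ κ)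
    (G : Type u) [Group G] (hG : IsKappaEC κ G) (hcard : κ ≤ Cardinal.mk G) :
    (∀ F : Finset G, ∃ K : Subgroup G,
      (IsKappaEC mu K ∧ Cardinal.mk K = mu) ∧ (F : Set G) ⊆ (K : Set G)) ∧
    DirectedOn (· ≤ ·) {K : Subgroup G | IsKappaEC mu K ∧ Cardinal.mk K = mu} :=
  stmt_13_general hmu (hGCH.two_powerlt_le hmu.aleph0_le) (hG.mono hle)
end
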